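/- For every positive integer N there exist N pairwise distinct finite multisets σ₁, …, σ_N of positive integers such that ν(σ_i) = 0 for every i and all the σ_i have the same sum of elements; consequently, for all real a, b, the quadratic polynomial factor a² − a + b² − b − ab − 2c of ν(σ_i; a, b) is the same for every i, where c is the common element sum. -/

import Mathlib

/-!
The multiset consisting of `x` copies of `x` has `ν = 0`, since `(x²)² = x · x³`. Moreover
`{k, k, k, k, k, 3k}` and `{2k, 2k, 2k, 2k}` have the same sum `8k` and the same sum of cubes
`32k³`, so exchanging one for the other changes neither the element sum nor `ν`. Taking `x = 4N`
and `k = 2N`, one may exchange `i` groups of four copies of `4N` for each `i < N`; the resulting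
multisets are distinguished by the multiplicity `i` of the element `6N`.
-/

/-- ν of a finite multiset of natural numbers, computed in ℤ. -/
def nu (σ : Multiset ℕ) : ℤ :=
  ((σ.map (fun x => (x : ℤ))).sum) ^ 2 - (σ.map (fun x => (x : ℤ) ^ 3)).sum

/-- The multiset of `4N` copies of `4N`, in which `i` groups `{4N, 4N, 4N, 4N}` are replaced by
`{2N, 2N, 2N, 2N, 2N, 6N}`. It has the intended meaning for `i ≤ N`. -/
def exchanged (N i : ℕ) : Multiset ℕ :=
  Multiset.replicate (4 * (N - i)) (4 * N) + Multiset.replicate (5 * i) (2 * N) +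
    Multiset.replicate i (6 * N)

theorem exchanged_sum {N i : ℕ} (h : i ≤ N) : (exchanged N i).sum = 16 * N ^ 2 := by
  obtain ⟨d, rfl⟩ := Nat.exists_eq_add_of_le h
  simp only [exchanged, Multiset.sum_add, Multiset.sum_replicate, smul_eq_mul,
    Nat.add_sub_cancel_left]
  ring

/-- In `nu` the coercion is elaborated on the multiset itself, as a monadic cast to `Multiset ℤ`.
Here `ν` is rewritten with the cast taken elementwise. -/
theorem nu_eq (σ : Multiset ℕ) :
    nu σ = ((σ.map fun x : ℕ => (x : ℤ)).sum) ^ 2 - (σ.map fun x : ℕ => (x : ℤ) ^ 3).sum := by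
  simp only [nu, Multiset.bind_def, Multiset.pure_def, Multiset.bind_singleton, Multiset.map_map,
    Function.comp_def]

theorem nu_exchanged {N i : ℕ} (h : i ≤ N) : nu (exchanged N i) = 0 := by
  obtain ⟨d, rfl⟩ := Nat.exists_eq_add_of_le h
  simp only [nu_eq, exchanged, Multiset.map_add, Multiset.map_replicate, Multiset.sum_add,
    Multiset.sum_replicate, nsmul_eq_mul, Nat.add_sub_cancel_left]
  push_cast
  ring

theorem count_exchanged {N : ℕ} (hN : 0 < N) (i : ℕ) :
    (exchanged N i).count (6 * N) = i := by
  have h4 : 4 * N ≠ 6 * N := by omega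
  have h2 : 2 * N ≠ 6 * N := by omega
  simp only [exchanged, Multiset.count_add, Multiset.count_replicate, if_neg h4, if_neg h2,
    if_true, zero_add]

theorem pos_of_mem_exchanged {N i : ℕ} (hN : 0 < N) {x : ℕ} (hx : x ∈ exchanged N i) :
    0 < x := by
  simp only [exchanged, Multiset.mem_add] at hx
  rcases hx with (hx | hx) | hx <;> have := Multiset.eq_of_mem_replicate hx <;> omega

/-- For every N there are N distinct ν = 0 multisets of positive integers with the
same element sum c, so the adjoined quadratic factor a² − a + b² − b − ab − 2c is the
same for all of them. -/
theorem stmt_19 (N : ℕ) (hN : 0 < N) :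
    ∃ σ : Fin N → Multiset ℕ, Function.Injective σ ∧
      (∀ i, ∀ x ∈ σ i, 0 < x) ∧
      (∀ i, nu (σ i) = 0) ∧
      ∃ c : ℕ, (∀ i, (σ i).sum = c) ∧
        (∀ i, ∀ a b : ℝ,
          a ^ 2 - a + b ^ 2 - b - a * b - 2 * ((σ i).sum : ℝ)
            = a ^ 2 - a + b ^ 2 - b - a * b - 2 * (c : ℝ)) := by
  refine ⟨fun i => exchanged N i, fun i j hij => ?_, fun i x hx => pos_of_mem_exchanged hN hx,
    fun i => nu_exchanged i.isLt.le, 16 * N ^ 2, fun i => exchanged_sum i.isLt.le,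
    fun i a b => ?_⟩
  · have h := congrArg (Multiset.count (6 * N)) hij
    simp only [count_exchanged hN] at h
    exact Fin.ext h
  · rw [exchanged_sum i.isLt.le]
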